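/- Let A be a real symmetric positive definite n×n matrix with smallest eigenvalue λ_min > 0 and largest eigenvalue λ_max, and set κ = λ_max/λ_min. Let b ∈ ℝⁿ, x₀ ∈ ℝⁿ, r₀ = b − Ax₀, x* = A⁻¹b, and for each k let x_k be the minimizer of the energy norm ‖x − x*‖_A over the affine Krylov space x₀ + K_k(A, r₀) with K_k(A, r₀) = span{r₀, Ar₀, …, A^{k−1}r₀}. Then the error e_k = x_k − x* satisfies ‖e_k‖_A ≤ 2·((√κ − 1)/(√κ + 1))^k · ‖e₀‖_A, where e₀ = x₀ − x* and ‖v‖_A = √(vᵀAv). -/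

import Mathlib

open Matrix

/-!
With `e₀ = x₀ - x*`, the points of the affine Krylov space are those `x` with
`x - x* = p(A) e₀` for a polynomial `p` of degree at most `k` with `p(0) = 1`. By the spectral
theorem, `‖p(A) e₀‖_A ≤ (max |p| over the spectrum of A) * ‖e₀‖_A`, so it suffices to find `p`
small on `[λ_min, λ_max]`. The Chebyshev polynomial `T_k`, transported to that interval and
normalised at `0`, is bounded there by `1 / T_k((λ_max + λ_min) / (λ_max - λ_min))`. That argument
is `cosh (log q)` for `q = (√κ - 1) / (√κ + 1)`, so the bound equals `1 / cosh (k log q) ≤ 2 q ^ k`.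
-/

section ChebyshevResidual

open Polynomial Real

lemma inv_cosh_le_two_mul_exp (x : ℝ) : (cosh x)⁻¹ ≤ 2 * exp x := by
  have exp_neg_le : exp (-x) ≤ 2 * cosh x := by
    rw [cosh_eq]
    linarith [exp_pos x]
  rw [inv_le_iff_one_le_mul₀ (cosh_pos x)]
  calc 1 = exp x * exp (-x) := by rw [← exp_add, add_neg_cancel, exp_zero]
    _ ≤ exp x * (2 * cosh x) := by gcongr
    _ = 2 * exp x * cosh x := by ring

lemma inv_eval_chebyshev_T_cosh_log_le (k : ℕ) {q : ℝ} (hq : 0 < q) :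
    ((Chebyshev.T ℝ k).eval (cosh (log q)))⁻¹ ≤ 2 * q ^ k := by
  calc ((Chebyshev.T ℝ k).eval (cosh (log q)))⁻¹ = (cosh (k * log q))⁻¹ := by
        rw [Chebyshev.T_real_cosh, Int.cast_natCast]
    _ ≤ 2 * exp (k * log q) := inv_cosh_le_two_mul_exp _
    _ = 2 * q ^ k := by rw [exp_nat_mul, exp_log hq]

lemma cosh_log_sub_one_div_add_one {s : ℝ} (hs : 1 < s) :
    cosh (log ((s - 1) / (s + 1))) = (s ^ 2 + 1) / (s ^ 2 - 1) := by
  have hsub : 0 < s - 1 := by linarith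
  have hadd : 0 < s + 1 := by linarith
  have hsq : s ^ 2 - 1 = (s - 1) * (s + 1) := by ring
  rw [cosh_log (div_pos hsub hadd), inv_div, hsq]
  field_simp
  ring

lemma one_lt_sqrt_div {a c : ℝ} (ha : 0 < a) (hac : a < c) : 1 < √(c / a) := by
  rwa [lt_sqrt zero_le_one, one_pow, one_lt_div ha]

lemma add_div_sub_eq_cosh_log {a c : ℝ} (ha : 0 < a) (hac : a < c) :
    (c + a) / (c - a) = cosh (log ((√(c / a) - 1) / (√(c / a) + 1))) := by
  have ratio_nonneg : 0 ≤ c / a := div_nonneg (ha.trans hac).le ha.le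
  have hsub : c - a ≠ 0 := (sub_pos.2 hac).ne'
  rw [cosh_log_sub_one_div_add_one (one_lt_sqrt_div ha hac), sq_sqrt ratio_nonneg]
  field_simp

lemma one_le_add_div_sub {a c : ℝ} (ha : 0 ≤ a) (hac : a < c) : 1 ≤ (c + a) / (c - a) := by
  rw [one_le_div (sub_pos.2 hac)]
  linarith

/-- The Chebyshev polynomial `T_k` transported from `[-1, 1]` to `[a, c]` by the decreasing affine
map `t ↦ (c + a - 2 * t) / (c - a)` and scaled to take the value `1` at `0`. It is meant for
`0 ≤ a < c`; for `a = c` the divisions by `c - a` return `0`. -/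
noncomputable def chebyshevResidual (k : ℕ) (a c : ℝ) : ℝ[X] :=
  C ((Chebyshev.T ℝ k).eval ((c + a) / (c - a)))⁻¹ *
    (Chebyshev.T ℝ k).comp (C ((c + a) / (c - a)) - C (2 / (c - a)) * X)

lemma eval_chebyshevResidual (k : ℕ) (a c t : ℝ) :
    (chebyshevResidual k a c).eval t =
      ((Chebyshev.T ℝ k).eval ((c + a) / (c - a)))⁻¹ *
        (Chebyshev.T ℝ k).eval ((c + a - 2 * t) / (c - a)) := by
  have affine : (c + a) / (c - a) - 2 / (c - a) * t = (c + a - 2 * t) / (c - a) := by ring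
  simp [chebyshevResidual, affine]

lemma natDegree_chebyshevResidual_le (k : ℕ) (a c : ℝ) :
    (chebyshevResidual k a c).natDegree ≤ k := by
  have affine_degree :
      (C ((c + a) / (c - a)) - C (2 / (c - a)) * X : ℝ[X]).natDegree ≤ 1 := by
    compute_degree
  calc (chebyshevResidual k a c).natDegree
      ≤ ((Chebyshev.T ℝ k).comp (C ((c + a) / (c - a)) - C (2 / (c - a)) * X)).natDegree :=
        natDegree_C_mul_le _ _
    _ ≤ k * 1 := by
        rw [natDegree_comp, Chebyshev.natDegree_T, Int.natAbs_natCast]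
        gcongr
    _ = k := mul_one k

lemma eval_zero_chebyshevResidual (k : ℕ) {a c : ℝ} (ha : 0 ≤ a) (hac : a < c) :
    (chebyshevResidual k a c).eval 0 = 1 := by
  have one_le_T := Chebyshev.one_le_eval_T_real k (one_le_add_div_sub ha hac)
  rw [eval_chebyshevResidual, mul_zero, sub_zero, inv_mul_cancel₀ (by linarith)]

lemma abs_eval_chebyshevResidual_le (k : ℕ) {a c t : ℝ} (ha : 0 < a) (hac : a < c)
    (ht : t ∈ Set.Icc a c) :
    |(chebyshevResidual k a c).eval t| ≤ 2 * ((√(c / a) - 1) / (√(c / a) + 1)) ^ k := by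
  have T_nonneg : 0 ≤ (Chebyshev.T ℝ k).eval ((c + a) / (c - a)) :=
    zero_le_one.trans (Chebyshev.one_le_eval_T_real k (one_le_add_div_sub ha.le hac))
  have abs_affine_le : |(c + a - 2 * t) / (c - a)| ≤ 1 := by
    have hsub : 0 < c - a := sub_pos.2 hac
    rw [abs_le, le_div_iff₀ hsub, div_le_iff₀ hsub]
    constructor <;> linarith [ht.1, ht.2]
  have rate_pos : 0 < (√(c / a) - 1) / (√(c / a) + 1) := by
    have := one_lt_sqrt_div ha hac
    exact div_pos (by linarith) (by linarith)
  rw [eval_chebyshevResidual, abs_mul, abs_of_nonneg (inv_nonneg.2 T_nonneg)]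
  calc _ ≤ ((Chebyshev.T ℝ k).eval ((c + a) / (c - a)))⁻¹ :=
        mul_le_of_le_one_right (inv_nonneg.2 T_nonneg)
          (Chebyshev.abs_eval_T_real_le_one k abs_affine_le)
    _ ≤ 2 * ((√(c / a) - 1) / (√(c / a) + 1)) ^ k := by
        rw [add_div_sub_eq_cosh_log ha hac]
        exact inv_eval_chebyshev_T_cosh_log_le k rate_pos

lemma exists_polynomial_abs_eval_le_on_Icc (k : ℕ) {a c : ℝ} (ha : 0 < a) (hac : a ≤ c) :
    ∃ p : ℝ[X], p.natDegree ≤ k ∧ p.eval 0 = 1 ∧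
      ∀ t ∈ Set.Icc a c, |p.eval t| ≤ 2 * ((√(c / a) - 1) / (√(c / a) + 1)) ^ k := by
  rcases hac.eq_or_lt with rfl | hlt
  · -- The Chebyshev construction degenerates on `{a}`; `(1 - t / a) ^ k` equals `0 ^ k` there.
    refine ⟨(1 - C a⁻¹ * X) ^ k, ?_, by simp, fun t ht => ?_⟩
    · compute_degree
    · obtain rfl : t = a := le_antisymm ht.2 ht.1
      cases k <;> simp [ha.ne']
  · exact ⟨chebyshevResidual k a c, natDegree_chebyshevResidual_le k a c,
      eval_zero_chebyshevResidual k ha.le hlt,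
      fun t ht => abs_eval_chebyshevResidual_le k ha hlt ht⟩

end ChebyshevResidual

section Krylov

open Polynomial

variable {ι R S : Type*} [Fintype ι] [DecidableEq ι]

/-- The `k`-th Krylov subspace of `A` and `r`, spanned by `r, A r, …, A ^ (k - 1) r`. -/
def krylovSubspace [CommSemiring R] (A : Matrix ι ι R) (r : ι → R) (k : ℕ) : Submodule R (ι → R) :=
  Submodule.span R (Set.range fun i : Fin k => (A ^ (i : ℕ)) *ᵥ r)

lemma aeval_mulVec_mem_krylovSubspace [CommSemiring R] [CommSemiring S] [Algebra S R]
    (A : Matrix ι ι R) (r : ι → R) {k : ℕ} {p : S[X]} (hp : p.degree < k) :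
    aeval A p *ᵥ r ∈ krylovSubspace A r k := by
  rw [aeval_def, eval₂_def, ← sum_fin _ (by simp) hp, sum_mulVec]
  refine sum_mem fun i _ => ?_
  rw [← Algebra.smul_def, smul_mulVec]
  exact Submodule.smul_of_tower_mem _ _ (Submodule.subset_span ⟨i, rfl⟩)

lemma sub_aeval_mulVec_mem_krylovSubspace [CommRing R] [CommSemiring S] [Algebra S R]
    (A : Matrix ι ι R) (v : ι → R) {k : ℕ} {p : S[X]} (hdeg : p.natDegree ≤ k)
    (hp : p.eval 0 = 1) : v - aeval A p *ᵥ v ∈ krylovSubspace A (A *ᵥ v) k := by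
  have divX_degree : p.divX.degree < k := by
    rw [degree_lt_iff_coeff_zero]
    intro m hm
    rw [coeff_divX, coeff_eq_zero_of_natDegree_lt (by lia)]
  have aeval_eq : aeval A p = aeval A p.divX * A + 1 := by
    conv_lhs => rw [← p.divX_mul_X_add, coeff_zero_eq_eval_zero, hp]
    simp
  have sub_eq : v - aeval A p *ᵥ v = -(aeval A p.divX *ᵥ (A *ᵥ v)) := by
    rw [aeval_eq, add_mulVec, one_mulVec, ← mulVec_mulVec]
    abel
  rw [sub_eq]
  exact neg_mem (aeval_mulVec_mem_krylovSubspace A _ divX_degree)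

end Krylov

section EnergyNorm

open Polynomial
open scoped ComplexOrder MatrixOrder

lemma aeval_mul_mul_aeval_le {𝒜 : Type*} [Ring 𝒜] [StarRing 𝒜] [TopologicalSpace 𝒜]
    [Algebra ℝ 𝒜] [ContinuousFunctionalCalculus ℝ 𝒜 IsSelfAdjoint] [PartialOrder 𝒜]
    [StarOrderedRing 𝒜] [NonnegSpectrumClass ℝ 𝒜] {a : 𝒜} (ha : 0 ≤ a) {p : ℝ[X]} {M : ℝ}
    (hp : ∀ t ∈ spectrum ℝ a, |p.eval t| ≤ M) :
    aeval a p * a * aeval a p ≤ M ^ 2 • a := by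
  have pointwise : ∀ t ∈ spectrum ℝ a, (p * X * p).eval t ≤ (C (M ^ 2) * X).eval t := by
    intro t ht
    have t_nonneg : 0 ≤ t := spectrum_nonneg_of_nonneg ha ht
    simp only [eval_mul, eval_X, eval_C]
    calc p.eval t * t * p.eval t = |p.eval t| ^ 2 * t := by rw [sq_abs]; ring
      _ ≤ M ^ 2 * t := by gcongr; exact hp t ht
  have cfc_le := cfc_mono (a := a) pointwise
  rw [cfc_polynomial _ a, cfc_polynomial _ a] at cfc_le
  simpa only [map_mul, aeval_X, aeval_C, ← Algebra.smul_def] using cfc_le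

variable {ι 𝕜 : Type*} [Fintype ι] [RCLike 𝕜]

/-- The energy norm `‖v‖_A = √(vᴴ A v)`. For Hermitian `A` the quadratic form is real, so taking
its real part only changes its type. -/
noncomputable def energyNorm (A : Matrix ι ι 𝕜) (v : ι → 𝕜) : ℝ :=
  √(RCLike.re (star v ⬝ᵥ A *ᵥ v))

lemma energyNorm_real (A : Matrix ι ι ℝ) (v : ι → ℝ) : energyNorm A v = √(v ⬝ᵥ A *ᵥ v) := by
  simp [energyNorm]

variable [DecidableEq ι] {A : Matrix ι ι 𝕜}

lemma energyNorm_aeval_mulVec_le (hA : A.PosSemidef) {p : ℝ[X]} {M : ℝ} (hM : 0 ≤ M)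
    (hp : ∀ t ∈ spectrum ℝ A, |p.eval t| ≤ M) (v : ι → 𝕜) :
    energyNorm A (aeval A p *ᵥ v) ≤ M * energyNorm A v := by
  have aeval_hermitian : (aeval A p)ᴴ = aeval A p := by
    rw [← cfc_polynomial p A hA.isHermitian]
    exact cfc_predicate (R := ℝ) (p := IsSelfAdjoint) _ A
  have form_le : RCLike.re (star (aeval A p *ᵥ v) ⬝ᵥ A *ᵥ (aeval A p *ᵥ v)) ≤
      M ^ 2 * RCLike.re (star v ⬝ᵥ A *ᵥ v) := by
    have sub_form_nonneg :=
      (Matrix.le_iff.1 (aeval_mul_mul_aeval_le hA.nonneg hp)).re_dotProduct_nonneg v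
    rw [sub_mulVec, dotProduct_sub, smul_mulVec, dotProduct_smul, map_sub, RCLike.smul_re,
      sub_nonneg] at sub_form_nonneg
    rwa [star_mulVec, aeval_hermitian, ← dotProduct_mulVec, mulVec_mulVec, mulVec_mulVec]
  calc energyNorm A (aeval A p *ᵥ v) ≤ √(M ^ 2 * RCLike.re (star v ⬝ᵥ A *ᵥ v)) :=
        Real.sqrt_le_sqrt form_le
    _ = M * energyNorm A v := by
        rw [Real.sqrt_mul (sq_nonneg M), Real.sqrt_sq hM, energyNorm]

/-- `x` is the `k`-th conjugate gradient iterate for `A x = b` started at `x₀`: it minimises the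
energy norm of the error over the affine Krylov space. The exact solution is written `A⁻¹ *ᵥ b`,
which is meaningful only for invertible `A`. -/
structure IsCGIterate (A : Matrix ι ι 𝕜) (b x₀ : ι → 𝕜) (k : ℕ) (x : ι → 𝕜) : Prop where
  sub_mem : x - x₀ ∈ krylovSubspace A (b - A *ᵥ x₀) k
  energyNorm_le : ∀ y, y - x₀ ∈ krylovSubspace A (b - A *ᵥ x₀) k →
    energyNorm A (x - A⁻¹ *ᵥ b) ≤ energyNorm A (y - A⁻¹ *ᵥ b)

lemma IsCGIterate.energyNorm_sub_le_energyNorm_aeval_mulVec {b x₀ x : ι → 𝕜} {k : ℕ}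
    (hx : IsCGIterate A b x₀ k x) (hA : IsUnit A) {p : ℝ[X]} (hdeg : p.natDegree ≤ k)
    (hp : p.eval 0 = 1) :
    energyNorm A (x - A⁻¹ *ᵥ b) ≤ energyNorm A (aeval A p *ᵥ (x₀ - A⁻¹ *ᵥ b)) := by
  have minimal := hx.energyNorm_le
  set y := A⁻¹ *ᵥ b
  have residual_eq : b - A *ᵥ x₀ = A *ᵥ (y - x₀) := by
    rw [mulVec_sub, mulVec_mulVec, mul_nonsing_inv A ((isUnit_iff_isUnit_det A).1 hA), one_mulVec]
  have trial_mem : y + aeval A p *ᵥ (x₀ - y) - x₀ ∈ krylovSubspace A (b - A *ᵥ x₀) k := by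
    have trial_sub : y + aeval A p *ᵥ (x₀ - y) - x₀ = (y - x₀) - aeval A p *ᵥ (y - x₀) := by
      rw [← neg_sub y x₀, mulVec_neg]
      abel
    rw [trial_sub, residual_eq]
    exact sub_aeval_mulVec_mem_krylovSubspace A _ hdeg hp
  simpa only [add_sub_cancel_left] using minimal _ trial_mem

theorem cg_energy_norm_convergence_general (hA : A.IsHermitian) {a c : ℝ} (ha : 0 < a)
    (hac : a ≤ c) (hspec : spectrum ℝ A ⊆ Set.Icc a c) {b x₀ x : ι → 𝕜} {k : ℕ}
    (hx : IsCGIterate A b x₀ k x) :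
    energyNorm A (x - A⁻¹ *ᵥ b) ≤
      2 * ((√(c / a) - 1) / (√(c / a) + 1)) ^ k * energyNorm A (x₀ - A⁻¹ *ᵥ b) := by
  have hpos : A.PosDef := hA.posDef_iff_eigenvalues_pos.2 fun i =>
    ha.trans_le (hspec (hA.eigenvalues_mem_spectrum_real i)).1
  obtain ⟨p, hdeg, hp0, hp⟩ := exists_polynomial_abs_eval_le_on_Icc k ha hac
  have bound_nonneg := (abs_nonneg _).trans (hp a (Set.left_mem_Icc.2 hac))
  exact (hx.energyNorm_sub_le_energyNorm_aeval_mulVec hpos.isUnit hdeg hp0).trans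
    (energyNorm_aeval_mulVec_le hpos.posSemidef bound_nonneg (fun t ht => hp t (hspec ht)) _)

end EnergyNorm

/-- Classical conjugate gradient convergence bound: if `A` is real symmetric positive
definite with smallest eigenvalue `λmin > 0` and largest eigenvalue `λmax`,
`κ = λmax/λmin`, `x* = A⁻¹ b`, `r₀ = b - A x₀`, and `x_k` minimizes the energy norm
`‖x - x*‖_A` over the affine Krylov space `x₀ + K_k(A, r₀)`, then
`‖x_k - x*‖_A ≤ 2 ((√κ - 1)/(√κ + 1))^k ‖x₀ - x*‖_A`. -/
theorem cg_energy_norm_convergence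
    (n k : ℕ) (A : Matrix (Fin n) (Fin n) ℝ)
    (hA : A.IsHermitian)
    (hpd : ∀ x : Fin n → ℝ, x ≠ 0 → 0 < x ⬝ᵥ A.mulVec x)
    (lmin lmax : ℝ) (hlmin : 0 < lmin)
    (hmin : IsLeast (Set.range hA.eigenvalues) lmin)
    (hmax : IsGreatest (Set.range hA.eigenvalues) lmax)
    (b x₀ : Fin n → ℝ)
    (r₀ : Fin n → ℝ) (hr₀ : r₀ = b - A.mulVec x₀)
    (xs : Fin n → ℝ) (hxs : xs = A⁻¹.mulVec b)
    (xk : Fin n → ℝ)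
    (hxk_mem : xk - x₀ ∈
      Submodule.span ℝ (Set.range fun i : Fin k => (A ^ (i : ℕ)).mulVec r₀))
    (hxk_min : ∀ x : Fin n → ℝ,
      x - x₀ ∈ Submodule.span ℝ (Set.range fun i : Fin k => (A ^ (i : ℕ)).mulVec r₀) →
      Real.sqrt ((xk - xs) ⬝ᵥ A.mulVec (xk - xs)) ≤
        Real.sqrt ((x - xs) ⬝ᵥ A.mulVec (x - xs))) :
    Real.sqrt ((xk - xs) ⬝ᵥ A.mulVec (xk - xs)) ≤
      2 * ((Real.sqrt (lmax / lmin) - 1) / (Real.sqrt (lmax / lmin) + 1)) ^ k *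
        Real.sqrt ((x₀ - xs) ⬝ᵥ A.mulVec (x₀ - xs)) := by
  subst hr₀ hxs
  simp only [← energyNorm_real] at hxk_min ⊢
  exact cg_energy_norm_convergence_general hA hlmin (hmin.2 hmax.1)
    (hA.spectrum_real_eq_range_eigenvalues ▸ fun _ h => ⟨hmin.2 h, hmax.2 h⟩) ⟨hxk_mem, hxk_min⟩
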